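/- arXiv:1012.4951 — 2 statements merged into one kernel-verified Lean document; each statement's English description precedes it below -/
import Mathlib

section
/- Let U ⊆ ℂ be a nonempty open connected set, let f : U → ℂ be holomorphic with f'(z) ≠ 0 for every z ∈ U, let (m,n) be a pair of integers with (m,n) ≠ (0,0), and let c ∈ ℂ. If f'(z)^m · conj(f'(z))^n = c for all z ∈ U (integer powers of the nonzero complex number f'(z)), then f is affine on U: there exist a, b ∈ ℂ with a ≠ 0 such that f(z) = a·z + b for all z ∈ U. -/
open Complex

/-!
If `f'` were not constant it would be an open map, so `w ↦ w ^ m * conj w ^ n` would be constant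
near some `w ≠ 0`. In the logarithmic coordinate `w * exp v` this makes `exp (m * v + n * conj v)`
constant near `v = 0`, so the real-linear map `v ↦ m * v + n * conj v` vanishes and `m = n = 0`.
-/

open scoped Topology ComplexConjugate

lemma eq_zero_of_eventually_cexp_eq_one {𝕜 E : Type*} [NontriviallyNormedField 𝕜]
    [NormedAlgebra 𝕜 ℂ] [NormedAddCommGroup E] [NormedSpace 𝕜 E] {L : E →L[𝕜] ℂ}
    (h : ∀ᶠ v in 𝓝 0, exp (L v) = 1) : L = 0 := by
  have hderiv : HasFDerivAt (fun v => exp (L v)) L 0 := by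
    simpa only [map_zero, exp_zero, one_smul] using (L.hasFDerivAt (x := 0)).cexp
  exact hderiv.unique ((hasFDerivAt_const 1 0).congr_of_eventuallyEq h)

lemma eq_zero_of_forall_mul_add_mul_conj_eq_zero {a b : ℂ} (h : ∀ v, a * v + b * conj v = 0) :
    a = 0 ∧ b = 0 := by
  have hadd : a + b = 0 := by simpa only [map_one, mul_one] using h 1
  have hsub : a - b = 0 := by
    have hI : (a - b) * I = 0 := by linear_combination h I - b * conj_I
    exact (mul_eq_zero.mp hI).resolve_right I_ne_zero
  constructor
  · linear_combination (hadd + hsub) / 2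
  · linear_combination (hadd - hsub) / 2

lemma cexp_zpow_mul_conj_cexp_zpow (m n : ℤ) (v : ℂ) :
    exp v ^ m * conj (exp v) ^ n = exp (m * v + n * conj v) := by
  rw [← exp_conj, ← exp_int_mul, ← exp_int_mul, exp_add]

lemma eventually_cexp_eq_one_of_eventually_zpow_mul_conj_zpow_eq {m n : ℤ} {c w : ℂ} (hw : w ≠ 0)
    (h : ∀ᶠ z in 𝓝 w, z ^ m * conj z ^ n = c) :
    ∀ᶠ v in 𝓝 0, exp (m * v + n * conj v) = 1 := by
  have hchart : Filter.Tendsto (fun v => w * exp v) (𝓝 0) (𝓝 w) := by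
    have hcont : Continuous fun v => w * exp v := by fun_prop
    simpa only [exp_zero, mul_one] using hcont.tendsto 0
  have hwc : w ^ m * conj w ^ n = c := h.self_of_nhds
  have hc : c ≠ 0 :=
    hwc ▸ mul_ne_zero (zpow_ne_zero m hw) (zpow_ne_zero n ((map_ne_zero _).mpr hw))
  filter_upwards [hchart.eventually h] with v hv
  apply mul_left_cancel₀ hc
  calc c * exp (m * v + n * conj v)
      = (w ^ m * conj w ^ n) * (exp v ^ m * conj (exp v) ^ n) := by
        rw [hwc, cexp_zpow_mul_conj_cexp_zpow]
    _ = (w * exp v) ^ m * conj (w * exp v) ^ n := by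
        rw [map_mul, mul_zpow, mul_zpow, mul_mul_mul_comm]
    _ = c * 1 := by rw [hv, mul_one]

lemma eq_zero_of_eventually_zpow_mul_conj_zpow_eq {m n : ℤ} {c w : ℂ} (hw : w ≠ 0)
    (h : ∀ᶠ z in 𝓝 w, z ^ m * conj z ^ n = c) : m = 0 ∧ n = 0 := by
  let L : ℂ →L[ℝ] ℂ := (m : ℂ) • .id ℝ ℂ + (n : ℂ) • conjCLE
  have hL : L = 0 := eq_zero_of_eventually_cexp_eq_one
    (eventually_cexp_eq_one_of_eventually_zpow_mul_conj_zpow_eq hw h)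
  exact_mod_cast eq_zero_of_forall_mul_add_mul_conj_eq_zero (DFunLike.congr_fun hL)

lemma exists_is_const_of_zpow_mul_conj_zpow_eq {U : Set ℂ} (hUo : IsOpen U)
    (hUc : IsPreconnected U) {g : ℂ → ℂ} (hg : AnalyticOnNhd ℂ g U) {m n : ℤ}
    (hmn : (m, n) ≠ (0, 0)) {c : ℂ} (hinv : ∀ z ∈ U, g z ^ m * conj (g z) ^ n = c) :
    ∃ a, ∀ z ∈ U, g z = a := by
  by_cases hzero : ∀ z ∈ U, g z = 0
  · exact ⟨0, hzero⟩
  push Not at hzero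
  obtain ⟨z₀, hz₀, hgz₀⟩ := hzero
  refine (hg.is_constant_or_isOpen hUc).resolve_right fun hopen => hmn ?_
  have himage : g '' U ∈ 𝓝 (g z₀) :=
    (hopen U subset_rfl hUo).mem_nhds (Set.mem_image_of_mem g hz₀)
  have hlocal : ∀ᶠ w in 𝓝 (g z₀), w ^ m * conj w ^ n = c :=
    Filter.mem_of_superset himage (Set.image_subset_iff.mpr hinv)
  exact Prod.ext_iff.mpr (eq_zero_of_eventually_zpow_mul_conj_zpow_eq hgz₀ hlocal)

/-- A holomorphic map on a nonempty open connected set that preserves the constant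
`(m,n)`-differential `dz^m dz̄^n` up to a multiplicative constant is affine. -/
theorem affine_of_preserves_constant_differential
    (U : Set ℂ) (hUne : U.Nonempty) (hUo : IsOpen U) (hUc : IsConnected U)
    (f : ℂ → ℂ) (hf : DifferentiableOn ℂ f U)
    (hf' : ∀ z ∈ U, deriv f z ≠ 0)
    (m n : ℤ) (hmn : (m, n) ≠ (0, 0)) (c : ℂ)
    (hinv : ∀ z ∈ U, (deriv f z) ^ m * (starRingEnd ℂ (deriv f z)) ^ n = c) :
    ∃ a b : ℂ, a ≠ 0 ∧ ∀ z ∈ U, f z = a * z + b := by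
  obtain ⟨z₀, hz₀⟩ := hUne
  obtain ⟨a, ha⟩ := exists_is_const_of_zpow_mul_conj_zpow_eq hUo hUc.isPreconnected
    (hf.analyticOnNhd hUo).deriv hmn hinv
  have hderiv : U.EqOn (deriv f) (deriv (a * ·)) := fun z hz => by
    rw [ha z hz, deriv_const_mul_id']
  obtain ⟨b, hb⟩ := hUo.exists_eq_add_of_deriv_eq hUc.isPreconnected hf
    (by fun_prop) hderiv
  exact ⟨a, b, ha z₀ hz₀ ▸ hf' z₀ hz₀, hb⟩
end

section
/- Let V ⊆ ℂ be a nonempty open connected set and let Ψ : V → ℂ be holomorphic. Assume that Ψ admits no proper analytic continuation: for every open connected set V' ⊆ ℂ with V ⊊ V' there is no holomorphic function g : V' → ℂ with g(z) = Ψ(z) for all z ∈ V. Let α, β ∈ ℂ with α ≠ 0, write γ(z) = α·z + β, and assume γ(V) ∩ V ≠ ∅ and Ψ(γ(z)) = Ψ(z) for every z ∈ V with γ(z) ∈ V. Then γ(V) = V. -/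
open Complex

/-! Deck invariance makes `Ψ ∘ γ` agree with `Ψ` on the nonempty overlap of `γ⁻¹(V)` and `V`, so the
two functions glue to an extension of `Ψ` to `V ∪ γ⁻¹(V)`, and maximality forces `γ⁻¹(V) ⊆ V`. The
hypotheses are symmetric in `γ` and `γ⁻¹`, which gives the reverse inclusion. -/

section MaximalDomain

variable {𝕜 E F : Type*} [NontriviallyNormedField 𝕜] [NormedAddCommGroup E] [NormedSpace 𝕜 E]
  [NormedAddCommGroup F] [NormedSpace 𝕜 F]

theorem differentiableOn_piecewise_union {s t : Set E} {f g : E → F}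
    [∀ x, Decidable (x ∈ s)] (hs : IsOpen s) (ht : IsOpen t) (hf : DifferentiableOn 𝕜 f s)
    (hg : DifferentiableOn 𝕜 g t) (hfg : Set.EqOn f g (s ∩ t)) :
    DifferentiableOn 𝕜 (s.piecewise f g) (s ∪ t) := by
  have hpiecewise_left : Set.EqOn (s.piecewise f g) f s := s.piecewise_eqOn f g
  have hpiecewise_right : Set.EqOn (s.piecewise f g) g t := fun x hxt => by
    by_cases hxs : x ∈ s
    · rw [hpiecewise_left hxs, hfg ⟨hxs, hxt⟩]
    · exact s.piecewise_eq_of_notMem f g hxs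
  exact (hf.congr hpiecewise_left).union_of_isOpen (hg.congr hpiecewise_right) hs ht

variable (𝕜) in
/-- `V` is a maximal domain of `Ψ`: `Ψ` is differentiable on the open connected set `V` and has no
differentiable extension to a strictly larger open connected set. Over `𝕜 = ℂ` this says that `Ψ`
is holomorphic on `V` without proper analytic continuation. Since `Ψ` is encoded as a total
function, its values outside `V` are irrelevant. -/
structure IsMaximalDomain (Ψ : E → F) (V : Set E) : Prop where
  isOpen : IsOpen V
  isConnected : IsConnected V
  differentiableOn : DifferentiableOn 𝕜 Ψ V
  not_exists_extension : ∀ V' : Set E, IsOpen V' → IsConnected V' → V ⊂ V' →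
    ¬ ∃ g : E → F, DifferentiableOn 𝕜 g V' ∧ ∀ z ∈ V, g z = Ψ z

namespace IsMaximalDomain

variable {Ψ : E → F} {V : Set E}

theorem subset_of_eqOn_inter (hV : IsMaximalDomain 𝕜 Ψ V) {U : Set E} {h : E → F}
    (hUo : IsOpen U) (hUc : IsConnected U) (hh : DifferentiableOn 𝕜 h U)
    (hVU : (V ∩ U).Nonempty) (heq : Set.EqOn Ψ h (V ∩ U)) : U ⊆ V := by
  classical
  by_contra hUV
  exact hV.not_exists_extension (V ∪ U) (hV.isOpen.union hUo) (hV.isConnected.union hVU hUc)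
    (Set.ssubset_union_left_iff.mpr hUV)
    ⟨V.piecewise Ψ h, differentiableOn_piecewise_union hV.isOpen hUo hV.differentiableOn hh heq,
      V.piecewise_eqOn Ψ h⟩

theorem preimage_subset (hV : IsMaximalDomain 𝕜 Ψ V) (γ : E ≃ₜ E) (hγ : Differentiable 𝕜 γ)
    (hmeet : (V ∩ γ ⁻¹' V).Nonempty) (hdeck : Set.EqOn Ψ (Ψ ∘ γ) (V ∩ γ ⁻¹' V)) :
    γ ⁻¹' V ⊆ V :=
  hV.subset_of_eqOn_inter (hV.isOpen.preimage γ.continuous)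
    (γ.isConnected_preimage.mpr hV.isConnected)
    (hV.differentiableOn.comp hγ.differentiableOn (Set.mapsTo_preimage γ V)) hmeet hdeck

end IsMaximalDomain

theorem domain_stable_under_deck_transformation_general {Ψ : E → F} {V : Set E}
    (hV : IsMaximalDomain 𝕜 Ψ V) (γ : E ≃ₜ E) (hγ : Differentiable 𝕜 γ)
    (hγsymm : Differentiable 𝕜 γ.symm) (hmeet : (γ '' V ∩ V).Nonempty)
    (hdeck : ∀ z ∈ V, γ z ∈ V → Ψ (γ z) = Ψ z) : γ '' V = V := by
  obtain ⟨-, ⟨w, hw, rfl⟩, hγw⟩ := hmeet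
  have hpreimage : γ ⁻¹' V ⊆ V :=
    hV.preimage_subset γ hγ ⟨w, hw, hγw⟩ fun z hz => (hdeck z hz.1 hz.2).symm
  have hpreimage_symm : γ.symm ⁻¹' V ⊆ V := by
    refine hV.preimage_subset γ.symm hγsymm ⟨γ w, hγw, by simpa using hw⟩ fun z hz => ?_
    simpa using hdeck (γ.symm z) hz.2 (by simpa using hz.1)
  rw [γ.image_eq_preimage_symm]
  refine hpreimage_symm.antisymm fun z hz => hpreimage ?_
  simpa using hz

end MaximalDomain

/-- Claim 1: the maximal domain `V` of `Ψ` is stable under every affine deck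
transformation `γ(z) = α z + β`. -/
theorem domain_stable_under_deck_transformation
    (V : Set ℂ) (hVne : V.Nonempty) (hVo : IsOpen V) (hVc : IsConnected V)
    (Ψ : ℂ → ℂ) (hΨ : DifferentiableOn ℂ Ψ V)
    (hmax : ∀ V' : Set ℂ, IsOpen V' → IsConnected V' → V ⊂ V' →
      ¬ ∃ g : ℂ → ℂ, DifferentiableOn ℂ g V' ∧ ∀ z ∈ V, g z = Ψ z)
    (α β : ℂ) (hα : α ≠ 0)
    (hmeet : ((fun z => α * z + β) '' V ∩ V).Nonempty)
    (hdeck : ∀ z ∈ V, α * z + β ∈ V → Ψ (α * z + β) = Ψ z) :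
    (fun z => α * z + β) '' V = V :=
  domain_stable_under_deck_transformation_general ⟨hVo, hVc, hΨ, hmax⟩ (affineHomeomorph α β hα)
    ((differentiable_id.const_mul α).add_const β) ((differentiable_id.sub_const β).div_const α)
    hmeet hdeck
end
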